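/- arXiv:1904.00484 — 2 statements merged into one kernel-verified Lean document; each statement's English description precedes it below -/
import Mathlib

section
/- Let k : ℝ → ℝ satisfy the sector condition with constants 0 ≤ k₁ ≤ k₂, and define k̃(e) = k(e) − k₂·e. Then for all e_i, e_j ∈ ℝ: |k̃(e_i − e_j) + k̃(e_j)| ≤ (k₂ − k₁)|e_i| + (k₂ − k₁)|e_j|. -/
/-!
The sector condition says that `k e = s * e` with a slope `s ∈ [k₁, k₂]` depending on `e`. If `s`
and `t` are the slopes at `eᵢ - eⱼ` and `eⱼ`, then
`k̃(eᵢ - eⱼ) + k̃(eⱼ) = (s - k₂) eᵢ + (t - s) eⱼ`, and both coefficients are differences of points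
of `[k₁, k₂]`.
-/

/-- A coupling function `k : ℝ → ℝ` satisfies the sector condition with constants
`0 ≤ k₁ ≤ k₂` if `k` is continuous and odd, `k(e)·e ≥ 0` for all `e`, and
`k₁|e| ≤ |k(e)| ≤ k₂|e|` for all `e`. -/
def SectorCondition (k : ℝ → ℝ) (k₁ k₂ : ℝ) : Prop :=
  (0 ≤ k₁ ∧ k₁ ≤ k₂) ∧ Continuous k ∧ (∀ e : ℝ, k (-e) = - k e) ∧
    (∀ e : ℝ, 0 ≤ k e * e) ∧ (∀ e : ℝ, k₁ * |e| ≤ |k e| ∧ |k e| ≤ k₂ * |e|)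

section LinearOrderedField

variable {K : Type*} [Field K] [LinearOrder K] [IsStrictOrderedRing K]

theorem exists_mem_Icc_eq_mul_of_abs_bounds {a b x y : K} (hab : a ≤ b) (hxy : 0 ≤ y * x)
    (hlower : a * |x| ≤ |y|) (hupper : |y| ≤ b * |x|) : ∃ s ∈ Set.Icc a b, y = s * x := by
  obtain rfl | hx := eq_or_ne x 0
  · have hy : y = 0 := by simpa using hupper
    exact ⟨a, Set.left_mem_Icc.mpr hab, by rw [hy, mul_zero]⟩
  · have hslope : y / x = |y| / |x| := by
      rw [← abs_div, abs_of_nonneg (div_nonneg_iff.mpr (mul_nonneg_iff.mp hxy))]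
    refine ⟨y / x, ?_, (div_mul_cancel₀ y hx).symm⟩
    rw [hslope]
    exact ⟨(le_div_iff₀ (abs_pos.mpr hx)).mpr hlower, (div_le_iff₀ (abs_pos.mpr hx)).mpr hupper⟩

theorem sector_lemma_general {k ktilde : K → K} {k₁ k₂ : K} (hsign : ∀ e, 0 ≤ k e * e)
    (hbound : ∀ e, k₁ * |e| ≤ |k e| ∧ |k e| ≤ k₂ * |e|) (hkt : ∀ e, ktilde e = k e - k₂ * e)
    (ei ej : K) :
    |ktilde (ei - ej) + ktilde ej| ≤ (k₂ - k₁) * |ei| + (k₂ - k₁) * |ej| := by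
  have hk : k₁ ≤ k₂ := by simpa using (hbound 1).1.trans (hbound 1).2
  have exists_slope (e : K) : ∃ s ∈ Set.Icc k₁ k₂, k e = s * e :=
    exists_mem_Icc_eq_mul_of_abs_bounds hk (hsign e) (hbound e).1 (hbound e).2
  obtain ⟨s, hs, hk_sub⟩ := exists_slope (ei - ej)
  obtain ⟨t, ht, hk_ej⟩ := exists_slope ej
  have hsum : ktilde (ei - ej) + ktilde ej = (s - k₂) * ei + (t - s) * ej := by
    rw [hkt, hkt, hk_sub, hk_ej]
    ring
  calc |ktilde (ei - ej) + ktilde ej|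
      = |(s - k₂) * ei + (t - s) * ej| := by rw [hsum]
    _ ≤ |s - k₂| * |ei| + |t - s| * |ej| := by
        simpa only [abs_mul] using abs_add_le ((s - k₂) * ei) ((t - s) * ej)
    _ ≤ (k₂ - k₁) * |ei| + (k₂ - k₁) * |ej| := by
        gcongr
        · exact abs_sub_le_of_le_of_le hs.1 hs.2 hk le_rfl
        · exact abs_sub_le_of_le_of_le ht.1 ht.2 hs.1 hs.2

end LinearOrderedField

/-- Lemma 1: for `k̃(e) = k(e) − k₂ e`,
`|k̃(eᵢ − eⱼ) + k̃(eⱼ)| ≤ (k₂ − k₁)|eᵢ| + (k₂ − k₁)|eⱼ|`. -/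
theorem sector_lemma (k : ℝ → ℝ) (k₁ k₂ : ℝ)
    (hsec : SectorCondition k k₁ k₂)
    (ktilde : ℝ → ℝ) (hkt : ∀ e : ℝ, ktilde e = k e - k₂ * e)
    (ei ej : ℝ) :
    |ktilde (ei - ej) + ktilde ej| ≤ (k₂ - k₁) * |ei| + (k₂ - k₁) * |ej| := by
  obtain ⟨-, -, -, hsign, hbound⟩ := hsec
  exact sector_lemma_general hsign hbound hkt ei ej
end

section
/- Let k : ℝ → ℝ satisfy the sector condition with constants 0 ≤ k₁ ≤ k₂. If e_i ≥ 0, e_j ≥ 0 and e_j − e_i < 0, then |−k₂·e_i + k(e_j) − k(e_j − e_i)| ≤ (k₂ − k₁)|e_i|. -/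
/-!
The graph of `k` lies between the lines of slopes `k₁` and `k₂` through the origin, so a secant
joining points on opposite sides of the origin also has slope in `[k₁, k₂]`. Since
`eᵢ = eⱼ - (eⱼ - eᵢ)` with `eⱼ - eᵢ ≤ 0 ≤ eⱼ`, both `k eⱼ - k (eⱼ - eᵢ)` and `k₂ eᵢ` lie in
`[k₁ eᵢ, k₂ eᵢ]`, an interval of length `(k₂ - k₁) eᵢ`.
-/

open Set

section StrictOrderedRing

variable {R : Type*} [Ring R] [LinearOrder R] [IsStrictOrderedRing R] {k₁ k₂ e y : R}

theorem nonneg_of_mul_nonneg_of_abs_le_mul_abs (he : 0 ≤ e) (hsign : 0 ≤ y * e)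
    (hupper : |y| ≤ k₂ * |e|) : 0 ≤ y := by
  rcases he.eq_or_lt with rfl | hpos
  · have hy : y = 0 := by simpa only [abs_zero, mul_zero, abs_nonpos_iff] using hupper
    exact hy.ge
  · exact nonneg_of_mul_nonneg_left hsign hpos

theorem mem_Icc_mul_of_nonneg (he : 0 ≤ e) (hsign : 0 ≤ y * e)
    (hsector : k₁ * |e| ≤ |y| ∧ |y| ≤ k₂ * |e|) : y ∈ Icc (k₁ * e) (k₂ * e) := by
  have hy : 0 ≤ y := nonneg_of_mul_nonneg_of_abs_le_mul_abs he hsign hsector.2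
  rwa [abs_of_nonneg he, abs_of_nonneg hy] at hsector

theorem mem_Icc_mul_of_nonpos (he : e ≤ 0) (hsign : 0 ≤ y * e)
    (hsector : k₁ * |e| ≤ |y| ∧ |y| ≤ k₂ * |e|) : y ∈ Icc (k₂ * e) (k₁ * e) := by
  have hneg : -y ∈ Icc (k₁ * -e) (k₂ * -e) :=
    mem_Icc_mul_of_nonneg (neg_nonneg.mpr he) (by rwa [neg_mul_neg]) (by rwa [abs_neg, abs_neg])
  rw [mul_neg, mul_neg] at hneg
  exact ⟨neg_le_neg_iff.mp hneg.2, neg_le_neg_iff.mp hneg.1⟩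

end StrictOrderedRing

theorem sub_mem_Icc_mul_sub_of_nonpos_of_nonneg {R : Type*} [Ring R] [PartialOrder R]
    [IsOrderedAddMonoid R] {k : R → R} {k₁ k₂ x z : R}
    (hnonneg : ∀ e, 0 ≤ e → k e ∈ Icc (k₁ * e) (k₂ * e))
    (hnonpos : ∀ e, e ≤ 0 → k e ∈ Icc (k₂ * e) (k₁ * e)) (hz : z ≤ 0) (hx : 0 ≤ x) :
    k x - k z ∈ Icc (k₁ * (x - z)) (k₂ * (x - z)) := by
  obtain ⟨hxlower, hxupper⟩ := hnonneg x hx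
  obtain ⟨hzlower, hzupper⟩ := hnonpos z hz
  rw [mul_sub, mul_sub]
  exact ⟨sub_le_sub hxlower hzupper, sub_le_sub hxupper hzlower⟩

theorem sector_case_two_general {R : Type*} [Ring R] [LinearOrder R] [IsOrderedAddMonoid R]
    {k : R → R} {k₁ k₂ ei ej : R} (hnonneg : ∀ e, 0 ≤ e → k e ∈ Icc (k₁ * e) (k₂ * e))
    (hnonpos : ∀ e, e ≤ 0 → k e ∈ Icc (k₂ * e) (k₁ * e)) (hej : 0 ≤ ej) (hij : ej ≤ ei) :
    |-(k₂ * ei) + k ej - k (ej - ei)| ≤ (k₂ - k₁) * |ei| := by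
  have hsecant : k ej - k (ej - ei) ∈ Icc (k₁ * ei) (k₂ * ei) := by
    simpa only [sub_sub_cancel] using
      sub_mem_Icc_mul_sub_of_nonpos_of_nonneg hnonneg hnonpos (sub_nonpos.mpr hij) hej
  have hslopes : k₁ * ei ≤ k₂ * ei := hsecant.1.trans hsecant.2
  calc |-(k₂ * ei) + k ej - k (ej - ei)|
      = |k ej - k (ej - ei) - k₂ * ei| := by congr 1; abel
    _ ≤ k₂ * ei - k₁ * ei := abs_sub_le_of_le_of_le hsecant.1 hsecant.2 hslopes le_rfl
    _ = (k₂ - k₁) * |ei| := by rw [abs_of_nonneg (hej.trans hij), sub_mul]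

/-- case `eᵢ ≥ 0`, `eⱼ ≥ 0`, `eⱼ − eᵢ < 0`. -/
theorem sector_case_two (k : ℝ → ℝ) (k₁ k₂ : ℝ)
    (hsec : SectorCondition k k₁ k₂)
    (ei ej : ℝ) (hei : 0 ≤ ei) (hej : 0 ≤ ej) (hij : ej - ei < 0) :
    |-(k₂ * ei) + k ej - k (ej - ei)| ≤ (k₂ - k₁) * |ei| := by
  obtain ⟨-, -, -, hsign, hsector⟩ := hsec
  exact sector_case_two_general (fun e he ↦ mem_Icc_mul_of_nonneg he (hsign e) (hsector e))
    (fun e he ↦ mem_Icc_mul_of_nonpos he (hsign e) (hsector e)) hej (sub_neg.mp hij).le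
end
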